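/- Let D = D₁×⋯×D_n ⊂ ℂ^n be an open polydisc, Ω ⊆ ℂ^n∖{0} an open set, and 1 ≤ k ≤ n. Let g(z,ζ) be C^∞ on D×Ω and holomorphic in ζ, and suppose that for all multi-indices α,β ∈ ℤ^n_{≥0} there exist h>0 and C>0 with |∂^α_z ∂^β_{z̄} g(z,ζ)| ≤ C·e^{−h|ζ|} on D×Ω. Let D'_k be an open disc with closure contained in D_k and let ψ ∈ C_c^∞(D_k) satisfy ψ ≡ 1 on a neighborhood of the closure of D'_k. Define G(z,ζ) = (1/(2πi)) ∬_{ℂ} ψ(τ) g(z₁,…,z_{k−1},τ,z_{k+1},…,z_n,ζ) (τ−z_k)^{−1} dτ∧dτ̄ (equivalently −(1/π)∬ ψ(τ)g(…,τ,…,ζ)(τ−z_k)^{−1} dλ(τ) with λ the Lebesgue measure on ℂ). Then: (i) G is C^∞ on D×Ω and holomorphic in ζ; (ii) ∂G/∂z̄_k = g at every point of D×Ω where z_k lies in the neighborhood on which ψ ≡ 1; (iii) for all multi-indices α,β there exist h'>0 and C'>0 with |∂^α_z ∂^β_{z̄} G(z,ζ)| ≤ C'·e^{−h'|ζ|} on (D₁×⋯×D'_k×⋯×D_n)×Ω;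 and (iv) if g is holomorphic in the variable z_j for some j ≠ k, then so is G. -/

import Mathlib

open Complex MeasureTheory

noncomputable section

/-- `ℂ^n`. -/
abbrev Cn (n : ℕ) : Type := Fin n → ℂ

/-- The space `ℂ^n_z × ℂ^n_ζ`. -/
abbrev Pt (n : ℕ) : Type := Cn n × Cn n

/-- The Euclidean norm of `ζ ∈ ℂ^n`. -/
def eucNorm {n : ℕ} (ζ : Cn n) : ℝ := Real.sqrt (∑ i, Complex.normSq (ζ i))

/-- Wirtinger derivative `∂/∂z_i` in the first variable. -/
def dz {n : ℕ} (i : Fin n) (f : Pt n → ℂ) : Pt n → ℂ := fun p =>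
  (1 / 2 : ℂ) * (fderiv ℝ f p ((Pi.single i 1 : Cn n), 0)
    - Complex.I * fderiv ℝ f p ((Pi.single i Complex.I : Cn n), 0))

/-- Wirtinger derivative `∂/∂z̄_i` in the first variable. -/
def dzbar {n : ℕ} (i : Fin n) (f : Pt n → ℂ) : Pt n → ℂ := fun p =>
  (1 / 2 : ℂ) * (fderiv ℝ f p ((Pi.single i 1 : Cn n), 0)
    + Complex.I * fderiv ℝ f p ((Pi.single i Complex.I : Cn n), 0))

/-- The iterated mixed derivative `∂^α_z ∂^β_z̄` in the first variable. -/
def mixedDeriv {n : ℕ} (α β : Fin n → ℕ) (f : Pt n → ℂ) : Pt n → ℂ :=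
  ((List.ofFn fun i => (dz i)^[α i]) ++ (List.ofFn fun i => (dzbar i)^[β i])).foldr
    (fun d g => d g) f

/-
After the substitution `τ = z_k - t`, the function `G` is the convolution of `ψ(z_k) g(z, ζ)` with
the kernel `1 / (π t)` along the complex lines parallel to the `z_k`-axis. The kernel is locally
integrable and the integrand has compact support on each line, so one may differentiate under the
integral: every Wirtinger derivative of `G` is the convolution of the same derivative of `ψ g`.
By the Leibniz rule the latter decays exponentially, and it vanishes if `g` is holomorphic in a
direction transversal to `z_k`. The equation `∂G/∂z̄_k = ψ g` is the Cauchy–Pompeiu formula,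
which follows from integration in polar coordinates.
-/

open scoped ContDiff ComplexConjugate

section Wirtinger

variable {E E' : Type*} [NormedAddCommGroup E] [NormedSpace ℝ E] [NormedSpace ℂ E]
  [NormedAddCommGroup E'] [NormedSpace ℝ E'] [NormedSpace ℂ E'] [IsScalarTower ℝ ℂ E']
  {U : Set E} {f g : E → ℂ} {x : E}

/-- The first-order operator `½ (∂_v + σ ∂_{I v})`. For `σ = -I` it is the holomorphic and for
`σ = I` the antiholomorphic Wirtinger derivative in the complex direction `v`. -/
def wirtinger (σ : ℂ) (v : E) (f : E → ℂ) : E → ℂ := fun x =>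
  (1 / 2 : ℂ) * (fderiv ℝ f x v + σ * fderiv ℝ f x (I • v))

theorem complex_smul_eq_re_smul_add_im_smul_I_smul [IsScalarTower ℝ ℂ E] (a : ℂ) (v : E) :
    a • v = a.re • v + a.im • (I • v) := by
  conv_lhs => rw [← re_add_im a, add_smul, mul_smul]
  simp only [← coe_algebraMap, algebraMap_smul]

theorem wirtinger_I_smul [IsScalarTower ℝ ℂ E] (a : ℂ) (v : E) (f : E → ℂ) (x : E) :
    wirtinger I (a • v) f x = conj a * wirtinger I v f x := by
  have hconj : conj a = a.re - a.im * I := by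
    apply Complex.ext <;> simp
  rw [wirtinger, smul_smul, complex_smul_eq_re_smul_add_im_smul_I_smul a,
    complex_smul_eq_re_smul_add_im_smul_I_smul (I * a)]
  simp only [wirtinger, map_add, map_smul, real_smul, I_mul_re, I_mul_im, hconj]
  push_cast
  linear_combination (1 / 2 : ℂ) * a.im * fderiv ℝ f x (I • v) * I_mul_I

theorem wirtinger_congr (hU : IsOpen U) (hfg : Set.EqOn f g U) (σ : ℂ) (v : E) :
    Set.EqOn (wirtinger σ v f) (wirtinger σ v g) U := fun x hx => by
  simp only [wirtinger, (hfg.eventuallyEq_of_mem (hU.mem_nhds hx)).fderiv_eq]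

theorem wirtinger_add (hf : DifferentiableAt ℝ f x) (hg : DifferentiableAt ℝ g x)
    (σ : ℂ) (v : E) :
    wirtinger σ v (f + g) x = wirtinger σ v f x + wirtinger σ v g x := by
  simp only [wirtinger, fderiv_add hf hg, add_apply]
  ring

theorem wirtinger_mul (hf : DifferentiableAt ℝ f x) (hg : DifferentiableAt ℝ g x)
    (σ : ℂ) (v : E) :
    wirtinger σ v (f * g) x = wirtinger σ v f x * g x + f x * wirtinger σ v g x := by
  simp only [wirtinger, fderiv_mul hf hg, add_apply, smul_apply, smul_eq_mul]
  ring

theorem wirtinger_comp [IsScalarTower ℝ ℂ E] {A : E' → E} {L : E' →L[ℂ] E} {y : E'}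
    (hf : DifferentiableAt ℝ f (A y)) (hA : HasFDerivAt A L y) (σ : ℂ) (v : E') :
    wirtinger σ v (f ∘ A) y = wirtinger σ (L v) f (A y) := by
  simp [wirtinger, (hf.hasFDerivAt.comp y (hA.restrictScalars ℝ)).fderiv]

theorem contDiffOn_wirtinger (hU : IsOpen U) (hf : ContDiffOn ℝ ∞ f U) (σ : ℂ) (v : E) :
    ContDiffOn ℝ ∞ (wirtinger σ v f) U := by
  have hfderiv : ContDiffOn ℝ ∞ (fderiv ℝ f) U := hf.fderiv_of_isOpen hU (by simp)
  exact contDiffOn_const.mul ((hfderiv.clm_apply contDiffOn_const).add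
    (contDiffOn_const.mul (hfderiv.clm_apply contDiffOn_const)))

theorem tsupport_wirtinger_subset (σ : ℂ) (v : E) (f : E → ℂ) :
    tsupport (wirtinger σ v f) ⊆ tsupport f := by
  refine closure_minimal (fun x hx => tsupport_fderiv_subset ℝ ?_) (isClosed_tsupport f)
  refine subset_tsupport _ fun hzero => hx ?_
  simp [wirtinger, hzero]

theorem differentiableAt_complex_iff_wirtinger_eq_zero [IsScalarTower ℝ ℂ E]
    (hf : DifferentiableAt ℝ f x) :
    DifferentiableAt ℂ f x ↔ ∀ v, wirtinger I v f x = 0 := by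
  have cauchyRiemann (v : E) :
      wirtinger I v f x = 0 ↔ fderiv ℝ f x (I • v) = I * fderiv ℝ f x v := by
    simp only [wirtinger, mul_eq_zero, one_div, inv_eq_zero, OfNat.ofNat_ne_zero, false_or]
    constructor <;> intro h
    · linear_combination -I * h + fderiv ℝ f x (I • v) * I_mul_I
    · linear_combination I * h + fderiv ℝ f x v * I_mul_I
  simp only [cauchyRiemann, differentiableAt_iff_restrictScalars ℝ hf]
  constructor
  · rintro ⟨L, hL⟩ v
    simp [← hL]
  · intro h
    refine ⟨⟨⟨⟨fderiv ℝ f x, map_add _⟩, fun a v => ?_⟩, (fderiv ℝ f x).continuous⟩, rfl⟩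
    simp only [complex_smul_eq_re_smul_add_im_smul_I_smul a v, map_add, map_smul, h, real_smul,
      RingHom.id_apply, smul_eq_mul]
    linear_combination fderiv ℝ f x v * re_add_im a

end Wirtinger

section CauchyPompeiu

theorem locallyIntegrable_complex_inv : LocallyIntegrable (fun t : ℂ => t⁻¹) := by
  refine locallyIntegrable_of_norm_le_rpow (C := 1) (α := 1) ?_ ?_ ?_ ?_
  · simp
  · simp
  · simp [Real.rpow_neg_one]
  · fun_prop

theorem integral_Ioi_fderiv_smul {E V : Type*} [NormedAddCommGroup E] [NormedSpace ℝ E]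
    [NormedAddCommGroup V] [NormedSpace ℝ V] [CompleteSpace V] {f : E → V}
    (hf : ContDiff ℝ 1 f) (hfc : HasCompactSupport f) {w : E} (hw : w ≠ 0) :
    ∫ r in Set.Ioi (0 : ℝ), fderiv ℝ f (r • w) w = -f 0 := by
  have hderiv (r : ℝ) : deriv (fun r : ℝ => f (r • w)) r = fderiv ℝ f (r • w) w := by
    have hray : HasDerivAt (fun r : ℝ => r • w) w r := by
      simpa using (hasDerivAt_id r).smul_const w
    exact ((hf.differentiable one_ne_zero _).hasFDerivAt.comp_hasDerivAt r hray).deriv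
  have hsupp : HasCompactSupport (fun r : ℝ => f (r • w)) :=
    hfc.comp_isClosedEmbedding (isClosedEmbedding_smul_left hw)
  simpa [hderiv] using hsupp.integral_Ioi_deriv_eq (by fun_prop) 0

theorem integral_fderiv_circleMap {V : Type*} [NormedAddCommGroup V] [NormedSpace ℝ V]
    [CompleteSpace V] {f : ℂ → V} (hf : ContDiff ℝ 1 f) (c : ℂ) (r : ℝ) :
    ∫ θ in -Real.pi..Real.pi, fderiv ℝ f (circleMap c r θ) (circleMap 0 r θ * I) = 0 := by
  have hderiv (θ : ℝ) : HasDerivAt (fun θ => f (circleMap c r θ))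
      (fderiv ℝ f (circleMap c r θ) (circleMap 0 r θ * I)) θ :=
    (hf.differentiable one_ne_zero _).hasFDerivAt.comp_hasDerivAt θ (hasDerivAt_circleMap c r θ)
  have hcont : Continuous fun θ => fderiv ℝ f (circleMap c r θ) (circleMap 0 r θ * I) := by
    fun_prop
  rw [intervalIntegral.integral_eq_sub_of_hasDerivAt (fun θ _ => hderiv θ)
    (hcont.intervalIntegrable _ _)]
  simp [circleMap, exp_neg, exp_pi_mul_I]

theorem integrableOn_polarCoord_target {V : Type*} [NormedAddCommGroup V] {f : ℝ × ℝ → V}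
    (hf : Continuous f) {R : ℝ} (hzero : ∀ p : ℝ × ℝ, R < p.1 → f p = 0) :
    IntegrableOn f polarCoord.target := by
  have hbox : IntegrableOn f (Set.Icc 0 R ×ˢ Set.Icc (-Real.pi) Real.pi) :=
    hf.continuousOn.integrableOn_compact (isCompact_Icc.prod isCompact_Icc)
  refine hbox.of_forall_sdiff_eq_zero polarCoord.open_target.measurableSet ?_
  rintro ⟨r, θ⟩ ⟨⟨hr, hθ⟩, hout⟩
  exact hzero _ (not_le.mp fun hrR => hout ⟨⟨hr.le, hrR⟩, hθ.1.le, hθ.2.le⟩)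

variable {f : ℂ → ℂ}

-- Polar coordinates: the factor `conj w = w⁻¹`, `w = exp (I θ)`, which `∂/∂z̄` picks up along the
-- direction `w`, is the one that the kernel `t⁻¹` supplies.
theorem integral_inv_mul_wirtinger_eq_integral_polarCoord :
    ∫ t : ℂ, t⁻¹ * wirtinger I 1 f t =
      ∫ p in polarCoord.target, wirtinger I (circleMap 0 1 p.2) f (circleMap 0 p.1 p.2) := by
  rw [← Complex.integral_comp_polarCoord_symm]
  refine setIntegral_congr_fun polarCoord.open_target.measurableSet ?_
  rintro ⟨r, θ⟩ ⟨hr, -⟩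
  have hr0 : (r : ℂ) ≠ 0 := ofReal_ne_zero.mpr (ne_of_gt hr)
  have hpolar : Complex.polarCoord.symm (r, θ) = circleMap 0 r θ := by
    simp [circleMap, exp_mul_I]
  have hinv : conj (circleMap 0 1 θ) = (circleMap 0 1 θ)⁻¹ :=
    (inv_eq_conj (by simp)).symm
  have hscale : circleMap 0 r θ = r * circleMap 0 1 θ := by simp [circleMap]
  have hdir := wirtinger_I_smul (circleMap 0 1 θ) 1 f (circleMap 0 r θ)
  rw [smul_eq_mul, mul_one, hinv] at hdir
  simp only [hpolar, hdir, real_smul]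
  rw [← mul_assoc, hscale, mul_inv, mul_inv_cancel_left₀ hr0]

theorem integrableOn_polarCoord_target_fderiv_circleMap (hf : ContDiff ℝ 1 f)
    (hfc : HasCompactSupport f) {u : ℝ → ℂ} (hu : Continuous u) :
    IntegrableOn (fun p : ℝ × ℝ => fderiv ℝ f (circleMap 0 p.1 p.2) (u p.2))
      polarCoord.target := by
  obtain ⟨R, hR⟩ := (hfc.fderiv (𝕜 := ℝ)).isCompact.isBounded.subset_closedBall 0
  refine integrableOn_polarCoord_target (by unfold circleMap; fun_prop) (R := R) fun p hp => ?_
  have hout : circleMap 0 p.1 p.2 ∉ tsupport (fderiv ℝ f) := fun hmem =>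
    hp.not_ge ((le_abs_self p.1).trans (by simpa using hR hmem))
  rw [image_eq_zero_of_notMem_tsupport hout, zero_apply]

theorem integral_polarCoord_target_fderiv_radial (hf : ContDiff ℝ 1 f)
    (hfc : HasCompactSupport f) :
    ∫ p in polarCoord.target, fderiv ℝ f (circleMap 0 p.1 p.2) (circleMap 0 1 p.2) =
      -(2 * Real.pi) * f 0 := by
  have hinner (θ : ℝ) :
      ∫ r in Set.Ioi (0 : ℝ), fderiv ℝ f (circleMap 0 r θ) (circleMap 0 1 θ) = -f 0 := by
    rw [← integral_Ioi_fderiv_smul hf hfc (w := circleMap 0 1 θ) (by simp)]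
    simp [circleMap]
  have hint :=
    integrableOn_polarCoord_target_fderiv_circleMap hf hfc (continuous_circleMap 0 1)
  rw [polarCoord_target, IntegrableOn, Measure.volume_eq_prod, ← Measure.prod_restrict] at hint
  rw [polarCoord_target, Measure.volume_eq_prod, ← Measure.prod_restrict,
    integral_prod_symm _ hint]
  simp only [hinner, setIntegral_const, Real.volume_real_Ioo, real_smul]
  rw [max_eq_left (by linarith [Real.pi_pos])]
  push_cast
  ring

theorem integral_polarCoord_target_fderiv_angular (hf : ContDiff ℝ 1 f)
    (hfc : HasCompactSupport f) :
    ∫ p in polarCoord.target, fderiv ℝ f (circleMap 0 p.1 p.2) (circleMap 0 1 p.2 * I) = 0 := by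
  have hint := integrableOn_polarCoord_target_fderiv_circleMap hf hfc
    ((continuous_circleMap 0 1).mul_const I)
  rw [polarCoord_target] at hint ⊢
  rw [Measure.volume_eq_prod, setIntegral_prod _ hint]
  refine setIntegral_eq_zero_of_forall_eq_zero fun r (hr : 0 < r) => ?_
  have hscale (θ : ℝ) : fderiv ℝ f (circleMap 0 r θ) (circleMap 0 r θ * I) =
      r • fderiv ℝ f (circleMap 0 r θ) (circleMap 0 1 θ * I) := by
    rw [← map_smul]
    simp [circleMap, mul_assoc]
  have hcircle := integral_fderiv_circleMap hf 0 r
  simp only [hscale] at hcircle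
  rw [intervalIntegral.integral_smul,
    intervalIntegral.integral_of_le (neg_le_self Real.pi_nonneg),
    integral_Ioc_eq_integral_Ioo] at hcircle
  exact (smul_eq_zero.mp hcircle).resolve_left (ne_of_gt hr)

/-- The Cauchy–Pompeiu formula. -/
theorem integral_inv_mul_wirtinger_eq (hf : ContDiff ℝ 1 f) (hfc : HasCompactSupport f) :
    ∫ t : ℂ, t⁻¹ * wirtinger I 1 f t = -Real.pi * f 0 := by
  have hradial :=
    integrableOn_polarCoord_target_fderiv_circleMap hf hfc (continuous_circleMap 0 1)
  have hangular := integrableOn_polarCoord_target_fderiv_circleMap hf hfc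
    ((continuous_circleMap 0 1).mul_const I)
  rw [integral_inv_mul_wirtinger_eq_integral_polarCoord]
  simp only [wirtinger, smul_eq_mul, mul_comm I (circleMap _ _ _)]
  rw [integral_const_mul, integral_add hradial (hangular.const_mul I), integral_const_mul,
    integral_polarCoord_target_fderiv_radial hf hfc,
    integral_polarCoord_target_fderiv_angular hf hfc]
  ring

end CauchyPompeiu

theorem differentiableAt_of_contDiffOn_infty {E W : Type*} [NormedAddCommGroup E]
    [NormedSpace ℝ E] [NormedAddCommGroup W] [NormedSpace ℝ W] {U : Set E} {f : E → W} {x : E}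
    (hU : IsOpen U) (hf : ContDiffOn ℝ ∞ f U) (hx : x ∈ U) : DifferentiableAt ℝ f x :=
  (hf.contDiffAt (hU.mem_nhds hx)).differentiableAt (by simp)

section IteratedWirtinger

variable {E E' : Type*} [NormedAddCommGroup E] [NormedSpace ℝ E] [NormedSpace ℂ E]
  [NormedAddCommGroup E'] [NormedSpace ℝ E'] [NormedSpace ℂ E']
  {U : Set E} {f g : E → ℂ}

/-- The composite of the operators `wirtinger σ v` for the pairs `(σ, v)` listed in `l`; the last
entry of the list acts first. -/
def iterWirtinger (l : List (ℂ × E)) (f : E → ℂ) : E → ℂ :=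
  l.foldr (fun p => wirtinger p.1 p.2) f

theorem iterWirtinger_cons (p : ℂ × E) (l : List (ℂ × E)) (f : E → ℂ) :
    iterWirtinger (p :: l) f = wirtinger p.1 p.2 (iterWirtinger l f) :=
  rfl

theorem iterWirtinger_append (l₁ l₂ : List (ℂ × E)) (f : E → ℂ) :
    iterWirtinger (l₁ ++ l₂) f = iterWirtinger l₁ (iterWirtinger l₂ f) :=
  List.foldr_append

theorem iterWirtinger_congr (hU : IsOpen U) (hfg : Set.EqOn f g U) (l : List (ℂ × E)) :
    Set.EqOn (iterWirtinger l f) (iterWirtinger l g) U := by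
  induction l with
  | nil => exact hfg
  | cons p l ih => exact wirtinger_congr hU ih p.1 p.2

theorem contDiffOn_iterWirtinger (hU : IsOpen U) (hf : ContDiffOn ℝ ∞ f U) (l : List (ℂ × E)) :
    ContDiffOn ℝ ∞ (iterWirtinger l f) U := by
  induction l with
  | nil => exact hf
  | cons p l ih => exact contDiffOn_wirtinger hU ih p.1 p.2

theorem iterWirtinger_add (hU : IsOpen U) (hf : ContDiffOn ℝ ∞ f U) (hg : ContDiffOn ℝ ∞ g U)
    (l : List (ℂ × E)) :
    Set.EqOn (iterWirtinger l (f + g)) (iterWirtinger l f + iterWirtinger l g) U := by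
  induction l with
  | nil => exact fun _ _ => rfl
  | cons p l ih =>
    intro x hx
    have hfl := differentiableAt_of_contDiffOn_infty hU (contDiffOn_iterWirtinger hU hf l) hx
    have hgl := differentiableAt_of_contDiffOn_infty hU (contDiffOn_iterWirtinger hU hg l) hx
    exact (wirtinger_congr hU ih p.1 p.2 hx).trans (wirtinger_add hfl hgl p.1 p.2)

theorem iterWirtinger_comp_continuousLinearMap [IsScalarTower ℝ ℂ E] [IsScalarTower ℝ ℂ E']
    (hf : ContDiff ℝ ∞ f) (L : E' →L[ℂ] E) (l : List (ℂ × E')) :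
    iterWirtinger l (f ∘ L) = iterWirtinger (l.map (Prod.map id L)) f ∘ L := by
  induction l with
  | nil => rfl
  | cons p l ih =>
    funext x
    have hsmooth := contDiffOn_iterWirtinger isOpen_univ hf.contDiffOn (l.map (Prod.map id L))
    rw [iterWirtinger_cons, ih, wirtinger_comp
      (differentiableAt_of_contDiffOn_infty isOpen_univ hsmooth (Set.mem_univ _)) L.hasFDerivAt]
    rfl

theorem tsupport_iterWirtinger_subset (l : List (ℂ × E)) (f : E → ℂ) :
    tsupport (iterWirtinger l f) ⊆ tsupport f := by
  induction l with
  | nil => exact subset_rfl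
  | cons p l ih => exact (tsupport_wirtinger_subset p.1 p.2 _).trans ih

theorem exists_norm_iterWirtinger_le (hf : ContDiff ℝ ∞ f) (hfc : HasCompactSupport f)
    (l : List (ℂ × E)) : ∃ M, ∀ x, ‖iterWirtinger l f x‖ ≤ M := by
  have hsmooth := contDiffOn_iterWirtinger isOpen_univ hf.contDiffOn l
  exact (hfc.mono' ((subset_tsupport _).trans (tsupport_iterWirtinger_subset l f)))
    |>.exists_bound_of_continuous (contDiffOn_univ.mp hsmooth).continuous

end IteratedWirtinger

section ExpDecay

variable {E : Type*} {N : E → ℝ} {V : Set E} {f g : E → ℂ}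

/-- Exponential decay on `V` with respect to the weight `N`; for a null-symbol `N (z, ζ) = |ζ|`. -/
def ExpDecayOn (N : E → ℝ) (V : Set E) (f : E → ℂ) : Prop :=
  ∃ h C : ℝ, 0 < h ∧ 0 < C ∧ ∀ x ∈ V, ‖f x‖ ≤ C * Real.exp (-h * N x)

theorem ExpDecayOn.congr (hf : ExpDecayOn N V f) (hfg : Set.EqOn f g V) : ExpDecayOn N V g := by
  obtain ⟨h, C, hh, hC, hbound⟩ := hf
  exact ⟨h, C, hh, hC, fun x hx => hfg hx ▸ hbound x hx⟩

theorem ExpDecayOn.mono (hf : ExpDecayOn N V f) {V' : Set E} (hV : V' ⊆ V) :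
    ExpDecayOn N V' f := by
  obtain ⟨h, C, hh, hC, hbound⟩ := hf
  exact ⟨h, C, hh, hC, fun x hx => hbound x (hV hx)⟩

protected theorem ExpDecayOn.add (hN : ∀ x ∈ V, 0 ≤ N x) (hf : ExpDecayOn N V f)
    (hg : ExpDecayOn N V g) : ExpDecayOn N V (f + g) := by
  obtain ⟨h₁, C₁, hh₁, hC₁, hbound₁⟩ := hf
  obtain ⟨h₂, C₂, hh₂, hC₂, hbound₂⟩ := hg
  refine ⟨min h₁ h₂, C₁ + C₂, lt_min hh₁ hh₂, add_pos hC₁ hC₂, fun x hx => ?_⟩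
  have hNx := hN x hx
  calc ‖f x + g x‖ ≤ C₁ * Real.exp (-h₁ * N x) + C₂ * Real.exp (-h₂ * N x) :=
        (norm_add_le _ _).trans (add_le_add (hbound₁ x hx) (hbound₂ x hx))
    _ ≤ C₁ * Real.exp (-min h₁ h₂ * N x) + C₂ * Real.exp (-min h₁ h₂ * N x) := by
        gcongr
        · exact min_le_left _ _
        · exact min_le_right _ _
    _ = (C₁ + C₂) * Real.exp (-min h₁ h₂ * N x) := by ring

theorem ExpDecayOn.bdd_mul (hf : ∃ M, ∀ x ∈ V, ‖f x‖ ≤ M) (hg : ExpDecayOn N V g) :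
    ExpDecayOn N V (f * g) := by
  obtain ⟨M, hM⟩ := hf
  obtain ⟨h, C, hh, hC, hbound⟩ := hg
  refine ⟨h, max M 1 * C, hh, by positivity, fun x hx => ?_⟩
  rw [Pi.mul_apply, norm_mul, mul_assoc]
  exact mul_le_mul ((hM x hx).trans (le_max_left M 1)) (hbound x hx) (norm_nonneg _)
    (by positivity)

variable [NormedAddCommGroup E] [NormedSpace ℝ E] [NormedSpace ℂ E]

-- Leibniz: each term of the expansion of `iterWirtinger l (f * g)` distributes `l` over two
-- complementary sublists, one for each factor.
theorem ExpDecayOn.iterWirtinger_mul (hN : ∀ x ∈ V, 0 ≤ N x) (hV : IsOpen V)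
    (hf : ContDiffOn ℝ ∞ f V) (hg : ContDiffOn ℝ ∞ g V) (l : List (ℂ × E))
    (hf_bdd : ∀ l', l'.Sublist l → ∃ M, ∀ x ∈ V, ‖iterWirtinger l' f x‖ ≤ M)
    (hg_decay : ∀ l', l'.Sublist l → ExpDecayOn N V (iterWirtinger l' g)) :
    ExpDecayOn N V (iterWirtinger l (f * g)) := by
  induction l using List.reverseRecOn generalizing f g with
  | nil => exact .bdd_mul (hf_bdd [] .slnil) (hg_decay [] .slnil)
  | append_singleton l p ih =>
    obtain ⟨σ, v⟩ := p
    have hf' := contDiffOn_wirtinger hV hf σ v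
    have hg' := contDiffOn_wirtinger hV hg σ v
    have hleibniz : Set.EqOn (wirtinger σ v (f * g))
        (wirtinger σ v f * g + f * wirtinger σ v g) V := fun x hx =>
      wirtinger_mul (differentiableAt_of_contDiffOn_infty hV hf hx)
        (differentiableAt_of_contDiffOn_infty hV hg hx) σ v
    have hsub {l' : List (ℂ × E)} (hl' : l'.Sublist l) :
        (l' ++ [(σ, v)]).Sublist (l ++ [(σ, v)]) :=
      hl'.append_right _
    have hsub' {l' : List (ℂ × E)} (hl' : l'.Sublist l) : l'.Sublist (l ++ [(σ, v)]) :=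
      hl'.trans (List.sublist_append_left _ _)
    have hfirst : ExpDecayOn N V (iterWirtinger l (wirtinger σ v f * g)) :=
      ih hf' hg (fun l' hl' => iterWirtinger_append l' [(σ, v)] f ▸ hf_bdd _ (hsub hl'))
        fun l' hl' => hg_decay l' (hsub' hl')
    have hsecond : ExpDecayOn N V (iterWirtinger l (f * wirtinger σ v g)) :=
      ih hf hg' (fun l' hl' => hf_bdd l' (hsub' hl'))
        fun l' hl' => iterWirtinger_append l' [(σ, v)] g ▸ hg_decay _ (hsub hl')
    rw [iterWirtinger_append]
    refine (ExpDecayOn.add hN hfirst hsecond).congr fun x hx => ?_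
    exact ((iterWirtinger_congr hV hleibniz l hx).trans
      (iterWirtinger_add hV (hf'.mul hg) (hf.mul hg') l hx)).symm

end ExpDecay

section LineFibered

variable {E : Type*} [NormedAddCommGroup E] [NormedSpace ℂ E]
  {e x : E} {ℓ : E →L[ℂ] ℂ} {U : Set E}

/-- `U` is an open union of complex lines in the direction `e`, and the linear functional `ℓ`
restricts to a coordinate on each of these lines. -/
structure IsLineFibered (e : E) (ℓ : E →L[ℂ] ℂ) (U : Set E) : Prop where
  isOpen : IsOpen U
  coord_direction : ℓ e = 1
  add_smul_mem : ∀ x ∈ U, ∀ t : ℂ, x + t • e ∈ U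

/-- The linear map that sends `(x, τ)` to the point of the line `x + ℂ e` whose coordinate is
`τ`. -/
def fiberPoint (e : E) (ℓ : E →L[ℂ] ℂ) : E × ℂ →L[ℂ] E :=
  .fst ℂ E ℂ + (ContinuousLinearMap.snd ℂ E ℂ - ℓ ∘L .fst ℂ E ℂ).smulRight e

theorem fiberPoint_apply (e : E) (ℓ : E →L[ℂ] ℂ) (q : E × ℂ) :
    fiberPoint e ℓ q = q.1 + (q.2 - ℓ q.1) • e :=
  rfl

theorem fiberPoint_coord (e : E) (ℓ : E →L[ℂ] ℂ) (x : E) : fiberPoint e ℓ (x, ℓ x) = x := by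
  simp [fiberPoint_apply]

theorem fiberPoint_coord_sub (e : E) (ℓ : E →L[ℂ] ℂ) (x : E) (t : ℂ) :
    fiberPoint e ℓ (x, ℓ x - t) = x - t • e := by
  simp [fiberPoint_apply, sub_eq_add_neg]

theorem IsLineFibered.sub_smul_mem (hU : IsLineFibered e ℓ U) (hx : x ∈ U) (t : ℂ) :
    x - t • e ∈ U := by
  simpa [sub_eq_add_neg] using hU.add_smul_mem x hx (-t)

theorem IsLineFibered.coord_sub_smul (hU : IsLineFibered e ℓ U) (x : E) (t : ℂ) :
    ℓ (x - t • e) = ℓ x - t := by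
  simp [hU.coord_direction]

theorem IsLineFibered.coord_fiberPoint (hU : IsLineFibered e ℓ U) (x : E) (τ : ℂ) :
    ℓ (fiberPoint e ℓ (x, τ)) = τ := by
  simp [fiberPoint_apply, hU.coord_direction]

end LineFibered

section SmoothFiberSupported

variable {E W : Type*} [NormedAddCommGroup E] [NormedSpace ℝ E] [NormedSpace ℂ E]
  [NormedAddCommGroup W] [NormedSpace ℝ W]
  {e x : E} {ℓ : E →L[ℂ] ℂ} {U : Set E} {S : Set ℂ} {F : E → W}

/-- `F` is smooth on `U` and vanishes at the points of `U` whose coordinate `ℓ` lies outside the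
compact set `S`. Nothing is asked of `F` off `U`. -/
structure SmoothFiberSupported (ℓ : E →L[ℂ] ℂ) (U : Set E) (S : Set ℂ) (F : E → W) : Prop where
  isCompact : IsCompact S
  contDiffOn : ContDiffOn ℝ ∞ F U
  eq_zero : ∀ x ∈ U, ℓ x ∉ S → F x = 0

protected theorem SmoothFiberSupported.fderiv (hF : SmoothFiberSupported ℓ U S F)
    (hU : IsOpen U) : SmoothFiberSupported ℓ U S (fderiv ℝ F) where
  isCompact := hF.isCompact
  contDiffOn := hF.contDiffOn.fderiv_of_isOpen hU (by simp)
  eq_zero x hx hxS := by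
    have hzero : F =ᶠ[nhds x] fun _ => 0 := by
      filter_upwards [hU.mem_nhds hx,
        ℓ.continuous.continuousAt (hF.isCompact.isClosed.isOpen_compl.mem_nhds hxS)]
        using hF.eq_zero
    rw [hzero.fderiv_eq, fderiv_fun_const, Pi.zero_apply]

protected theorem SmoothFiberSupported.iterWirtinger {F : E → ℂ}
    (hF : SmoothFiberSupported ℓ U S F) (hU : IsOpen U) (l : List (ℂ × E)) :
    SmoothFiberSupported ℓ U S (iterWirtinger l F) := by
  induction l with
  | nil => exact hF
  | cons p l ih =>
    refine ⟨ih.isCompact, contDiffOn_wirtinger hU ih.contDiffOn p.1 p.2, fun x hx hxS => ?_⟩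
    simp [iterWirtinger_cons, wirtinger, (ih.fderiv hU).eq_zero x hx hxS]

theorem SmoothFiberSupported.hasCompactSupport (hF : SmoothFiberSupported ℓ U S F)
    (hU : IsLineFibered e ℓ U) (hx : x ∈ U) : HasCompactSupport fun t : ℂ => F (x - t • e) := by
  refine .intro (hF.isCompact.image (continuous_sub_left (ℓ x))) fun t ht => ?_
  refine hF.eq_zero _ (hU.sub_smul_mem hx t) fun hS => ht ⟨ℓ x - t, ?_, sub_sub_cancel _ _⟩
  rwa [← hU.coord_sub_smul]

theorem SmoothFiberSupported.apply_fiberPoint_eq_zero (hF : SmoothFiberSupported ℓ U S F)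
    (hU : IsLineFibered e ℓ U) (hx : x ∈ U) {τ : ℂ} (hτ : τ ∉ S) :
    F (fiberPoint e ℓ (x, τ)) = 0 :=
  hF.eq_zero _ (hU.add_smul_mem x hx _) (by rwa [hU.coord_fiberPoint])

variable [IsScalarTower ℝ ℂ E]

theorem SmoothFiberSupported.contDiff_line (hF : SmoothFiberSupported ℓ U S F)
    (hU : IsLineFibered e ℓ U) (hx : x ∈ U) : ContDiff ℝ ∞ fun t : ℂ => F (x - t • e) := by
  rw [← contDiffOn_univ]
  refine hF.contDiffOn.comp (ContDiff.contDiffOn ?_) fun t _ => hU.sub_smul_mem hx t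
  fun_prop

theorem SmoothFiberSupported.contDiffOn_fiberPoint (hF : SmoothFiberSupported ℓ U S F)
    (hU : IsLineFibered e ℓ U) :
    ContDiffOn ℝ ∞ (fun q => F (fiberPoint e ℓ q)) (U ×ˢ Set.univ) :=
  hF.contDiffOn.comp ((fiberPoint e ℓ).restrictScalars ℝ).contDiff.contDiffOn
    fun q hq => hU.add_smul_mem q.1 hq.1 _

theorem SmoothFiberSupported.integrable [NormedSpace ℂ W] (hF : SmoothFiberSupported ℓ U S F)
    (hU : IsLineFibered e ℓ U) {κ : ℂ → ℂ} (hκ : LocallyIntegrable κ) (hx : x ∈ U) :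
    Integrable fun t : ℂ => κ t • F (x - t • e) :=
  hκ.integrable_smul_right_of_hasCompactSupport (hF.contDiff_line hU hx).continuous
    (hF.hasCompactSupport hU hx)

end SmoothFiberSupported

section LineConvolution

variable {E W : Type*} [NormedAddCommGroup E] [NormedSpace ℂ E]
  [NormedAddCommGroup W] [NormedSpace ℝ W] [NormedSpace ℂ W]
  {κ : ℂ → ℂ} {e x : E} {ℓ : E →L[ℂ] ℂ} {U : Set E} {S : Set ℂ}

/-- The convolution of `F` with the kernel `κ` along the complex lines in the direction `e`. -/
def lineConvolution (κ : ℂ → ℂ) (e : E) (F : E → W) : E → W := fun x =>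
  ∫ t : ℂ, κ t • F (x - t • e)

theorem lineConvolution_eq_convolution [IsScalarTower ℝ ℂ W] (κ : ℂ → ℂ) (e : E)
    (ℓ : E →L[ℂ] ℂ) (F : E → W) :
    lineConvolution κ e F = fun x =>
      convolution κ (fun τ => F (fiberPoint e ℓ (x, τ))) (.lsmul ℝ ℂ) volume (ℓ x) := by
  funext x
  simp only [convolution, fiberPoint_coord_sub]
  rfl

variable [NormedSpace ℝ E] [IsScalarTower ℝ ℂ E]

theorem SmoothFiberSupported.contDiffOn_lineConvolution [IsScalarTower ℝ ℂ W] {F : E → W}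
    (hF : SmoothFiberSupported ℓ U S F) (hU : IsLineFibered e ℓ U)
    (hκ : LocallyIntegrable κ) : ContDiffOn ℝ ∞ (lineConvolution κ e F) U := by
  rw [lineConvolution_eq_convolution κ e ℓ F]
  exact contDiffOn_convolution_right_with_param_comp _
    (ℓ.restrictScalars ℝ).contDiff.contDiffOn hU.isOpen hF.isCompact
    (fun p τ hp hτ => hF.apply_fiberPoint_eq_zero hU hp hτ) hκ (hF.contDiffOn_fiberPoint hU)

theorem SmoothFiberSupported.hasFDerivAt_lineConvolution [IsScalarTower ℝ ℂ W] {F : E → W}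
    (hF : SmoothFiberSupported ℓ U S F) (hU : IsLineFibered e ℓ U)
    (hκ : LocallyIntegrable κ) (hx : x ∈ U) :
    HasFDerivAt (lineConvolution κ e F) (lineConvolution κ e (fderiv ℝ F) x) x := by
  let graph : E →L[ℝ] E × ℂ := .prod (.id ℝ E) (ℓ.restrictScalars ℝ)
  let point : E × ℂ →L[ℝ] E := (fiberPoint e ℓ).restrictScalars ℝ
  have hconv := hasFDerivAt_convolution_right_with_param (.lsmul ℝ ℂ) hU.isOpen hF.isCompact
    (fun p τ hp hτ => hF.apply_fiberPoint_eq_zero hU hp hτ) hκ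
    ((hF.contDiffOn_fiberPoint hU).of_le (by simp)) (x, ℓ x) hx
  have hchain (t : ℂ) :
      fderiv ℝ (fun q => F (fiberPoint e ℓ q)) (x, ℓ x - t) = fderiv ℝ F (x - t • e) ∘L point := by
    have hdiff := differentiableAt_of_contDiffOn_infty hU.isOpen hF.contDiffOn
      (hU.sub_smul_mem hx t)
    rw [← fiberPoint_coord_sub e ℓ] at hdiff ⊢
    exact (hdiff.hasFDerivAt.comp (x, ℓ x - t) point.hasFDerivAt).fderiv
  have hpoint (v : E) : point (graph v) = v := fiberPoint_coord e ℓ v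
  have hint := (hF.fderiv hU.isOpen).integrable hU hκ hx
  have hint_point : Integrable fun t => (κ t • fderiv ℝ F (x - t • e)) ∘L point :=
    ((ContinuousLinearMap.compL ℝ (E × ℂ) E W).flip point).integrable_comp hint
  rw [lineConvolution_eq_convolution κ e ℓ F]
  refine (hconv.comp x graph.hasFDerivAt).congr_fderiv (ContinuousLinearMap.ext fun v => ?_)
  rw [ContinuousLinearMap.comp_apply, lineConvolution, ContinuousLinearMap.integral_apply hint]
  have hintegral : convolution κ (fun τ => fderiv ℝ (fun q => F (fiberPoint e ℓ q)) (x, τ))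
      (ContinuousLinearMap.precompR (E × ℂ) (.lsmul ℝ ℂ)) volume (ℓ x) =
      ∫ t, (κ t • fderiv ℝ F (x - t • e)) ∘L point := by
    simp only [convolution, hchain]
    rfl
  refine (congrArg (· (graph v)) hintegral).trans ?_
  rw [ContinuousLinearMap.integral_apply hint_point]
  simp [hpoint]

variable {F : E → ℂ}

theorem SmoothFiberSupported.wirtinger_lineConvolution (hF : SmoothFiberSupported ℓ U S F)
    (hU : IsLineFibered e ℓ U) (hκ : LocallyIntegrable κ) (σ : ℂ) (v : E) :
    Set.EqOn (wirtinger σ v (lineConvolution κ e F))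
      (lineConvolution κ e (wirtinger σ v F)) U := fun x hx => by
  have hint := (hF.fderiv hU.isOpen).integrable hU hκ hx
  have hint_apply (w : E) : Integrable fun t => κ t * fderiv ℝ F (x - t • e) w :=
    (ContinuousLinearMap.apply ℝ ℂ w).integrable_comp hint
  have hfderiv (w : E) : fderiv ℝ (lineConvolution κ e F) x w =
      ∫ t, κ t * fderiv ℝ F (x - t • e) w := by
    rw [(hF.hasFDerivAt_lineConvolution hU hκ hx).fderiv]
    exact ContinuousLinearMap.integral_apply hint w
  simp only [wirtinger, hfderiv]
  rw [← integral_const_mul, ← integral_add (hint_apply _) ((hint_apply _).const_mul _),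
    ← integral_const_mul]
  refine integral_congr_ae (.of_forall fun t => ?_)
  simp only [wirtinger, smul_eq_mul]
  ring

theorem SmoothFiberSupported.iterWirtinger_lineConvolution (hF : SmoothFiberSupported ℓ U S F)
    (hU : IsLineFibered e ℓ U) (hκ : LocallyIntegrable κ) (l : List (ℂ × E)) :
    Set.EqOn (iterWirtinger l (lineConvolution κ e F))
      (lineConvolution κ e (iterWirtinger l F)) U := by
  induction l with
  | nil => exact fun _ _ => rfl
  | cons p l ih =>
    exact (wirtinger_congr hU.isOpen ih p.1 p.2).trans
      ((hF.iterWirtinger hU.isOpen l).wirtinger_lineConvolution hU hκ p.1 p.2)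

end LineConvolution

section KernelBound

variable {κ : ℂ → ℂ} {B : ℝ} {S : Set ℂ}

-- Splitting the kernel at the unit circle, `C = ∫_{|t| < 1} |κ| + B vol S` does not depend on `a`.
theorem exists_norm_integral_mul_le (hκ : LocallyIntegrable κ) (hB : 0 ≤ B)
    (hκB : ∀ t, 1 ≤ ‖t‖ → ‖κ t‖ ≤ B) (hS : IsCompact S) :
    ∃ C, ∀ (a : ℂ) (f : ℂ → ℂ) (M : ℝ), 0 ≤ M → (∀ t, ‖f t‖ ≤ M) →
      (∀ t, a - t ∉ S → f t = 0) → ‖∫ t, κ t * f t‖ ≤ C * M := by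
  let near : ℂ → ℝ := (Metric.closedBall 0 1).indicator fun t => ‖κ t‖
  let far : ℂ → ℝ := S.indicator fun _ => B
  have hnear : Integrable near := by
    rw [integrable_indicator_iff measurableSet_closedBall]
    exact (hκ.integrableOn_isCompact (isCompact_closedBall 0 1)).norm
  have hfar : Integrable far := by
    rw [integrable_indicator_iff hS.measurableSet]
    exact integrableOn_const hS.measure_ne_top
  refine ⟨(∫ t, near t) + ∫ t, far t, fun a f M hM hfM hfS => ?_⟩
  have hfar_comp : Integrable fun t => far (a - t) := hfar.comp_sub_left a
  have hle (t : ℂ) : ‖κ t * f t‖ ≤ (near t + far (a - t)) * M := by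
    have hnear0 : 0 ≤ near t := Set.indicator_nonneg (fun _ _ => norm_nonneg _) t
    have hfar0 : 0 ≤ far (a - t) := Set.indicator_nonneg (fun _ _ => hB) _
    by_cases htS : a - t ∈ S
    · have hκt : ‖κ t‖ ≤ near t + far (a - t) := by
        rcases le_total ‖t‖ 1 with ht | ht
        · simp only [near, Set.indicator_of_mem (mem_closedBall_zero_iff.mpr ht)]
          linarith
        · simp only [far, Set.indicator_of_mem htS]
          linarith [hκB t ht]
      rw [norm_mul]
      exact mul_le_mul hκt (hfM t) (norm_nonneg _) (by positivity)
    · rw [hfS t htS, mul_zero, norm_zero]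
      positivity
  calc ‖∫ t, κ t * f t‖ ≤ ∫ t, (near t + far (a - t)) * M :=
        norm_integral_le_of_norm_le ((hnear.add hfar_comp).mul_const M) (.of_forall hle)
    _ = ((∫ t, near t) + ∫ t, far t) * M := by
        rw [integral_mul_const, integral_add hnear hfar_comp, integral_sub_left_eq_self]

variable {E : Type*} [NormedAddCommGroup E] [NormedSpace ℝ E] [NormedSpace ℂ E]
  {e : E} {ℓ : E →L[ℂ] ℂ} {U : Set E} {N : E → ℝ} {F : E → ℂ}

protected theorem ExpDecayOn.lineConvolution (hF : SmoothFiberSupported ℓ U S F)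
    (hU : IsLineFibered e ℓ U) (hκ : LocallyIntegrable κ) (hB : 0 ≤ B)
    (hκB : ∀ t, 1 ≤ ‖t‖ → ‖κ t‖ ≤ B) (hN : ∀ x (t : ℂ), N (x - t • e) = N x)
    (hdecay : ExpDecayOn N U F) : ExpDecayOn N U (lineConvolution κ e F) := by
  obtain ⟨h, C, hh, hC, hbound⟩ := hdecay
  obtain ⟨K, hK⟩ := exists_norm_integral_mul_le hκ hB hκB hF.isCompact
  refine ⟨h, max K 1 * C, hh, by positivity, fun x hx => ?_⟩
  have hline (t : ℂ) : ‖F (x - t • e)‖ ≤ C * Real.exp (-h * N x) :=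
    hN x t ▸ hbound _ (hU.sub_smul_mem hx t)
  have hsupp (t : ℂ) (ht : ℓ x - t ∉ S) : F (x - t • e) = 0 :=
    hF.eq_zero _ (hU.sub_smul_mem hx t) (by rwa [hU.coord_sub_smul])
  rw [mul_assoc]
  exact (hK (ℓ x) _ _ (by positivity) hline hsupp).trans
    (mul_le_mul_of_nonneg_right (le_max_left K 1) (by positivity))

end KernelBound

section CauchyTransform

variable {E : Type*} [NormedAddCommGroup E] [NormedSpace ℝ E] [NormedSpace ℂ E]
  [IsScalarTower ℝ ℂ E]
  {e x : E} {ℓ : E →L[ℂ] ℂ} {U : Set E} {S : Set ℂ} {F : E → ℂ}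

/-- The fundamental solution `1 / (π t)` of `∂/∂t̄`, with the junk value `0` at `t = 0`. -/
def cauchyKernel (t : ℂ) : ℂ :=
  (Real.pi : ℂ)⁻¹ * t⁻¹

theorem locallyIntegrable_cauchyKernel : LocallyIntegrable cauchyKernel :=
  locallyIntegrable_complex_inv.smul (Real.pi : ℂ)⁻¹

theorem norm_cauchyKernel_le {t : ℂ} (ht : 1 ≤ ‖t‖) : ‖cauchyKernel t‖ ≤ Real.pi⁻¹ := by
  rw [cauchyKernel, norm_mul, norm_inv, norm_inv, norm_real, Real.norm_of_nonneg Real.pi_nonneg]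
  exact mul_le_of_le_one_right (by positivity) (inv_le_one_of_one_le₀ ht)

theorem SmoothFiberSupported.wirtinger_lineConvolution_cauchyKernel
    (hF : SmoothFiberSupported ℓ U S F) (hU : IsLineFibered e ℓ U) :
    Set.EqOn (wirtinger I e (lineConvolution cauchyKernel e F)) F U := fun x hx => by
  have hline (t : ℂ) :
      wirtinger I 1 (fun t : ℂ => F (x - t • e)) t = -wirtinger I e F (x - t • e) := by
    have hdiff := differentiableAt_of_contDiffOn_infty hU.isOpen hF.contDiffOn
      (hU.sub_smul_mem hx t)
    have haffine : HasFDerivAt (fun t : ℂ => x - t • e)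
        (-(ContinuousLinearMap.id ℂ ℂ).smulRight e) t :=
      ((hasFDerivAt_id t).smul_const e).const_sub x
    refine (wirtinger_comp (A := fun t : ℂ => x - t • e) hdiff haffine I 1).trans ?_
    simpa using wirtinger_I_smul (-1) e F (x - t • e)
  have hpompeiu := integral_inv_mul_wirtinger_eq ((hF.contDiff_line hU hx).of_le (by simp))
    (hF.hasCompactSupport hU hx)
  simp only [hline, mul_neg, integral_neg, zero_smul, sub_zero] at hpompeiu
  rw [hF.wirtinger_lineConvolution hU locallyIntegrable_cauchyKernel I e hx]
  simp only [lineConvolution, cauchyKernel, smul_eq_mul, mul_assoc, integral_const_mul]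
  rw [neg_mul, neg_inj] at hpompeiu
  rw [hpompeiu, inv_mul_cancel_left₀ (ofReal_ne_zero.mpr Real.pi_ne_zero)]

end CauchyTransform

section Cutoff

variable {E : Type*} [NormedAddCommGroup E] [NormedSpace ℂ E] {e x : E} {ℓ : E →L[ℂ] ℂ}
  {V : Set E}

/-- The union of the complex lines in the direction `e` that meet `V`. -/
def lineSaturation (e : E) (V : Set E) : Set E :=
  {x | ∃ t : ℂ, x + t • e ∈ V}

theorem subset_lineSaturation (e : E) (V : Set E) : V ⊆ lineSaturation e V := fun x hx =>
  ⟨0, by simpa using hx⟩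

theorem isLineFibered_lineSaturation (hV : IsOpen V) (he : ℓ e = 1) :
    IsLineFibered e ℓ (lineSaturation e V) where
  isOpen := by
    simp only [lineSaturation, Set.ofPred_exists]
    exact isOpen_iUnion fun t => hV.preimage (continuous_add_const _)
  coord_direction := he
  add_smul_mem := by
    rintro x ⟨s, hs⟩ t
    exact ⟨s - t, by rwa [add_assoc, ← add_smul, add_sub_cancel]⟩

/-- `φ` is a smooth cut-off function of the coordinate `ℓ` such that replacing the coordinate of a
point of the open set `V` by a point of the support of `φ` does not lead out of `V`. -/
structure IsFiberCutoff (e : E) (ℓ : E →L[ℂ] ℂ) (V : Set E) (φ : ℂ → ℂ) : Prop where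
  isOpen : IsOpen V
  coord_direction : ℓ e = 1
  contDiff : ContDiff ℝ ∞ φ
  hasCompactSupport : HasCompactSupport φ
  fiberPoint_mem : ∀ x ∈ V, ∀ τ ∈ tsupport φ, fiberPoint e ℓ (x, τ) ∈ V

/-- The Cauchy transform, along the complex lines in the direction `e`, of `g` cut off by `φ`. -/
def cutoffCauchyTransform (e : E) (ℓ : E →L[ℂ] ℂ) (φ : ℂ → ℂ) (g : E → ℂ) : E → ℂ :=
  lineConvolution cauchyKernel e (φ ∘ ℓ * g)

namespace IsFiberCutoff

variable {φ : ℂ → ℂ} {g : E → ℂ}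

theorem isLineFibered (hφ : IsFiberCutoff e ℓ V φ) : IsLineFibered e ℓ (lineSaturation e V) :=
  isLineFibered_lineSaturation hφ.isOpen hφ.coord_direction

theorem mem_of_mem_lineSaturation (hφ : IsFiberCutoff e ℓ V φ) (hx : x ∈ lineSaturation e V)
    (hxφ : ℓ x ∈ tsupport φ) : x ∈ V := by
  obtain ⟨t, ht⟩ := hx
  simpa [fiberPoint_apply, hφ.coord_direction, add_assoc] using hφ.fiberPoint_mem _ ht _ hxφ

variable [NormedSpace ℝ E] [IsScalarTower ℝ ℂ E]

theorem contDiff_comp_coord (hφ : IsFiberCutoff e ℓ V φ) : ContDiff ℝ ∞ (φ ∘ ℓ) :=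
  hφ.contDiff.comp (ℓ.restrictScalars ℝ).contDiff

theorem smoothFiberSupported (hφ : IsFiberCutoff e ℓ V φ) (hg : ContDiffOn ℝ ∞ g V) :
    SmoothFiberSupported ℓ (lineSaturation e V) (tsupport φ) (φ ∘ ℓ * g) where
  isCompact := hφ.hasCompactSupport
  contDiffOn x hx := by
    refine ContDiffAt.contDiffWithinAt ?_
    by_cases hxφ : ℓ x ∈ tsupport φ
    · have hxV := hφ.mem_of_mem_lineSaturation hx hxφ
      exact hφ.contDiff_comp_coord.contDiffAt.mul (hg.contDiffAt (hφ.isOpen.mem_nhds hxV))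
    · have hzero : φ ∘ ℓ * g =ᶠ[nhds x] fun _ => 0 := by
        filter_upwards [ℓ.continuous.continuousAt
          ((isClosed_tsupport φ).isOpen_compl.mem_nhds hxφ)] with y hy
        simp [image_eq_zero_of_notMem_tsupport hy]
      exact contDiffAt_const.congr_of_eventuallyEq hzero
  eq_zero x _ hxφ := by simp [image_eq_zero_of_notMem_tsupport hxφ]

theorem contDiffOn_cutoffCauchyTransform (hφ : IsFiberCutoff e ℓ V φ)
    (hg : ContDiffOn ℝ ∞ g V) : ContDiffOn ℝ ∞ (cutoffCauchyTransform e ℓ φ g) V :=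
  ((hφ.smoothFiberSupported hg).contDiffOn_lineConvolution hφ.isLineFibered
    locallyIntegrable_cauchyKernel).mono (subset_lineSaturation e V)

theorem wirtinger_cutoffCauchyTransform (hφ : IsFiberCutoff e ℓ V φ)
    (hg : ContDiffOn ℝ ∞ g V) :
    Set.EqOn (wirtinger I e (cutoffCauchyTransform e ℓ φ g)) (φ ∘ ℓ * g) V :=
  ((hφ.smoothFiberSupported hg).wirtinger_lineConvolution_cauchyKernel hφ.isLineFibered).mono
    (subset_lineSaturation e V)

theorem wirtinger_cutoffCauchyTransform_eq_zero (hφ : IsFiberCutoff e ℓ V φ)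
    (hg : ContDiffOn ℝ ∞ g V) {v : E} (hv : ℓ v = 0) (hgv : ∀ x ∈ V, wirtinger I v g x = 0) :
    ∀ x ∈ V, wirtinger I v (cutoffCauchyTransform e ℓ φ g) x = 0 := by
  have hF := hφ.smoothFiberSupported hg
  have hU := hφ.isLineFibered
  have hzero (y : E) (hy : y ∈ lineSaturation e V) : wirtinger I v (φ ∘ ℓ * g) y = 0 := by
    by_cases hyφ : ℓ y ∈ tsupport φ
    · have hyV := hφ.mem_of_mem_lineSaturation hy hyφ
      have hcoord : wirtinger I v (φ ∘ ℓ) y = 0 := by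
        rw [wirtinger_comp (hφ.contDiff.differentiable (by simp) _) ℓ.hasFDerivAt, hv]
        simp [wirtinger]
      rw [wirtinger_mul (hφ.contDiff_comp_coord.differentiable (by simp) y)
        (differentiableAt_of_contDiffOn_infty hφ.isOpen hg hyV), hcoord, hgv y hyV]
      simp
    · exact (hF.iterWirtinger hU.isOpen [(I, v)]).eq_zero y hy hyφ
  intro x hx
  have hxU := subset_lineSaturation e V hx
  rw [cutoffCauchyTransform,
    hF.wirtinger_lineConvolution hU locallyIntegrable_cauchyKernel I v hxU]
  simp [lineConvolution, hzero _ (hU.sub_smul_mem hxU _)]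

theorem exists_norm_iterWirtinger_comp_coord_le (hφ : IsFiberCutoff e ℓ V φ)
    (l : List (ℂ × E)) : ∃ M, ∀ x, ‖iterWirtinger l (φ ∘ ℓ) x‖ ≤ M := by
  obtain ⟨M, hM⟩ := exists_norm_iterWirtinger_le hφ.contDiff hφ.hasCompactSupport
    (l.map (Prod.map id ℓ))
  rw [iterWirtinger_comp_continuousLinearMap hφ.contDiff]
  exact ⟨M, fun x => hM (ℓ x)⟩

theorem expDecayOn_iterWirtinger_cutoffCauchyTransform (hφ : IsFiberCutoff e ℓ V φ)
    (hg : ContDiffOn ℝ ∞ g V) {N : E → ℝ} (hN : ∀ x, 0 ≤ N x)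
    (hNe : ∀ x (t : ℂ), N (x - t • e) = N x) (l : List (ℂ × E))
    (hdecay : ∀ l', l'.Sublist l → ExpDecayOn N V (iterWirtinger l' g)) :
    ExpDecayOn N V (iterWirtinger l (cutoffCauchyTransform e ℓ φ g)) := by
  have hU := hφ.isLineFibered
  have hF := hφ.smoothFiberSupported hg
  have hFl := hF.iterWirtinger hU.isOpen l
  have hdecay_V : ExpDecayOn N V (iterWirtinger l (φ ∘ ℓ * g)) :=
    .iterWirtinger_mul (fun x _ => hN x) hφ.isOpen hφ.contDiff_comp_coord.contDiffOn hg l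
      (fun l' _ => (hφ.exists_norm_iterWirtinger_comp_coord_le l').imp fun _ hM x _ => hM x) hdecay
  have hdecay_U : ExpDecayOn N (lineSaturation e V) (iterWirtinger l (φ ∘ ℓ * g)) := by
    obtain ⟨h, C, hh, hC, hbound⟩ := hdecay_V
    refine ⟨h, C, hh, hC, fun x hx => ?_⟩
    by_cases hxφ : ℓ x ∈ tsupport φ
    · exact hbound x (hφ.mem_of_mem_lineSaturation hx hxφ)
    · rw [hFl.eq_zero x hx hxφ, norm_zero]
      positivity
  have htransform := ExpDecayOn.lineConvolution hFl hU locallyIntegrable_cauchyKernel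
    (by positivity) (fun _ => norm_cauchyKernel_le) hNe hdecay_U
  exact (htransform.congr (hF.iterWirtinger_lineConvolution hU
    locallyIntegrable_cauchyKernel l).symm).mono (subset_lineSaturation e V)

end IsFiberCutoff

end Cutoff

section MultiIndex

variable {A : Type*} {m : ℕ}

/-- The word `a₀ ⋯ a₀ a₁ ⋯ a₁ ⋯` in which the letter `a i` is repeated `α i` times. -/
def powerWord (a : Fin m → A) (α : Fin m → ℕ) : List A :=
  (List.ofFn fun i => List.replicate (α i) (a i)).flatten

theorem exists_eq_powerWord_of_sublist (a : Fin m → A) {α : Fin m → ℕ} {l : List A}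
    (hl : l.Sublist (powerWord a α)) : ∃ α', l = powerWord a α' := by
  induction m generalizing l with
  | zero => exact ⟨α, by simpa [powerWord] using hl⟩
  | succ m ih =>
    rw [powerWord, List.ofFn_succ, List.flatten_cons, List.sublist_append_iff] at hl
    obtain ⟨l₀, l₁, rfl, hl₀, hl₁⟩ := hl
    obtain ⟨j, -, rfl⟩ := List.sublist_replicate_iff.mp hl₀
    obtain ⟨α', rfl⟩ := ih (fun i => a i.succ) hl₁
    exact ⟨Fin.cons j α', by simp [powerWord, List.ofFn_succ]⟩

variable {E : Type*} [NormedAddCommGroup E] [NormedSpace ℝ E] [NormedSpace ℂ E]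

theorem iterWirtinger_replicate (j : ℕ) (σ : ℂ) (v : E) :
    iterWirtinger (List.replicate j (σ, v)) = (wirtinger σ v)^[j] := by
  induction j with
  | zero => rfl
  | succ j ih => rw [Function.iterate_succ', ← ih]; rfl

theorem iterWirtinger_flatten (L : List (List (ℂ × E))) (f : E → ℂ) :
    iterWirtinger L.flatten f = (L.map iterWirtinger).foldr (fun d g => d g) f := by
  rw [iterWirtinger, List.foldr_flatten, List.foldr_map]
  rfl

theorem iterWirtinger_powerWord (σ : ℂ) (v : Fin m → E) (α : Fin m → ℕ) (f : E → ℂ) :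
    iterWirtinger (powerWord (fun i => (σ, v i)) α) f =
      (List.ofFn fun i => (wirtinger σ (v i))^[α i]).foldr (fun d g => d g) f := by
  simp only [powerWord, iterWirtinger_flatten, List.map_ofFn, Function.comp_def,
    iterWirtinger_replicate]

end MultiIndex

section Coordinates

theorem differentiableAt_complex_prodMk_iff_wirtinger_eq_zero {E E' : Type*}
    [NormedAddCommGroup E] [NormedSpace ℝ E] [NormedSpace ℂ E] [IsScalarTower ℝ ℂ E]
    [NormedAddCommGroup E'] [NormedSpace ℝ E'] [NormedSpace ℂ E'] [IsScalarTower ℝ ℂ E']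
    {f : E × E' → ℂ} {z : E} {ζ : E'} (hf : DifferentiableAt ℝ f (z, ζ)) :
    DifferentiableAt ℂ (fun ζ => f (z, ζ)) ζ ↔ ∀ w : E', wirtinger I (0, w) f (z, ζ) = 0 := by
  have hslice : DifferentiableAt ℝ (fun ζ => f (z, ζ)) ζ :=
    hf.comp ζ (differentiableAt_const z |>.prodMk differentiableAt_id)
  rw [differentiableAt_complex_iff_wirtinger_eq_zero hslice]
  refine forall_congr' fun w => ?_
  exact (congrArg (· = 0) (wirtinger_comp hf (hasFDerivAt_prodMk_right z ζ) I w)).to_iff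

variable {n : ℕ}

/-- The direction of the coordinate `z_i` in `ℂ^n_z × ℂ^n_ζ`. -/
def zDirection (i : Fin n) : Pt n :=
  (Pi.single i 1, 0)

/-- The coordinate `z_i` on `ℂ^n_z × ℂ^n_ζ`. -/
def zCoord (i : Fin n) : Pt n →L[ℂ] ℂ :=
  ContinuousLinearMap.proj i ∘L ContinuousLinearMap.fst ℂ (Cn n) (Cn n)

theorem zCoord_zDirection (i j : Fin n) :
    zCoord i (zDirection j) = Pi.single (M := fun _ => ℂ) j 1 i :=
  rfl

theorem I_smul_zDirection (i : Fin n) : I • zDirection i = (Pi.single i I, 0) := by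
  simp [zDirection, ← Pi.single_smul]

theorem dz_eq_wirtinger (i : Fin n) : dz i = wirtinger (-I) (zDirection i) := by
  funext f x
  simp only [dz, wirtinger, I_smul_zDirection, neg_mul, sub_eq_add_neg]
  rfl

theorem dzbar_eq_wirtinger (i : Fin n) : dzbar i = wirtinger I (zDirection i) := by
  funext f x
  simp only [dzbar, wirtinger, I_smul_zDirection]
  rfl

/-- The word of Wirtinger operators whose composite is `∂^α_z ∂^β_z̄`. -/
def mixedWord (α β : Fin n → ℕ) : List (ℂ × Pt n) :=
  powerWord (fun i => (-I, zDirection i)) α ++ powerWord (fun i => (I, zDirection i)) β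

theorem mixedDeriv_eq_iterWirtinger (α β : Fin n → ℕ) (f : Pt n → ℂ) :
    mixedDeriv α β f = iterWirtinger (mixedWord α β) f := by
  simp only [mixedDeriv, mixedWord, iterWirtinger_append, iterWirtinger_powerWord,
    List.foldr_append, dz_eq_wirtinger, dzbar_eq_wirtinger]

theorem exists_eq_mixedWord_of_sublist {α β : Fin n → ℕ} {l : List (ℂ × Pt n)}
    (hl : l.Sublist (mixedWord α β)) : ∃ α' β', l = mixedWord α' β' := by
  obtain ⟨l₁, l₂, rfl, hl₁, hl₂⟩ := List.sublist_append_iff.mp hl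
  obtain ⟨α', rfl⟩ := exists_eq_powerWord_of_sublist _ hl₁
  obtain ⟨β', rfl⟩ := exists_eq_powerWord_of_sublist _ hl₂
  exact ⟨α', β', rfl⟩

theorem fiberPoint_zDirection (k : Fin n) (x : Pt n) (τ : ℂ) :
    fiberPoint (zDirection k) (zCoord k) (x, τ) = (Function.update x.1 k τ, x.2) := by
  refine Prod.ext (funext fun i => ?_) (by simp [fiberPoint_apply, zDirection])
  rcases eq_or_ne i k with rfl | hik
  · simp [fiberPoint_apply, zDirection, zCoord]
  · simp [fiberPoint_apply, zDirection, hik]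

theorem isFiberCutoff_zDirection {k : Fin n} {D Ω : Set (Cn n)} {ψ : ℂ → ℂ} (hD : IsOpen D)
    (hΩ : IsOpen Ω) (hψ : ContDiff ℝ ∞ ψ) (hψc : HasCompactSupport ψ)
    (hDψ : ∀ z ∈ D, ∀ τ ∈ tsupport ψ, Function.update z k τ ∈ D) :
    IsFiberCutoff (zDirection k) (zCoord k) (D ×ˢ Ω) ψ where
  isOpen := hD.prod hΩ
  coord_direction := by simp [zCoord_zDirection]
  contDiff := hψ
  hasCompactSupport := hψc
  fiberPoint_mem x hx τ hτ := by
    rw [fiberPoint_zDirection]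
    exact ⟨hDψ x.1 hx.1 τ hτ, hx.2⟩

theorem cutoffCauchyTransform_zDirection (k : Fin n) (ψ : ℂ → ℂ) (g : Pt n → ℂ) (x : Pt n) :
    cutoffCauchyTransform (zDirection k) (zCoord k) ψ g x = (-(1 : ℂ) / (Real.pi : ℂ)) *
      ∫ τ : ℂ, ψ τ * g (Function.update x.1 k τ, x.2) / (τ - x.1 k) := by
  have hpoint (t : ℂ) : x - t • zDirection k = (Function.update x.1 k (x.1 k - t), x.2) :=
    (fiberPoint_coord_sub (zDirection k) (zCoord k) x t).symm.trans (fiberPoint_zDirection k x _)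
  have hcoord (τ : ℂ) : zCoord k (Function.update x.1 k τ, x.2) = τ :=
    Function.update_self ..
  rw [cutoffCauchyTransform, lineConvolution, ← integral_const_mul,
    ← integral_sub_left_eq_self _ volume (x.1 k)]
  refine integral_congr_ae (.of_forall fun t => ?_)
  simp only [cauchyKernel, Pi.mul_apply, Function.comp_apply, smul_eq_mul, hpoint, hcoord,
    sub_sub_cancel]
  rw [← neg_sub t (x.1 k), inv_neg]
  ring

theorem eucNorm_nonneg (ζ : Cn n) : 0 ≤ eucNorm ζ :=
  Real.sqrt_nonneg _

end Coordinates

theorem cutoff_cauchy_transform_general {n : ℕ} (k : Fin n)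
    (Ω : Set (Cn n)) (hΩopen : IsOpen Ω) (D : Set (Cn n)) (hDopen : IsOpen D)
    (g : Pt n → ℂ) (hg_smooth : ContDiffOn ℝ ∞ g (D ×ˢ Ω))
    (hg_hol : ∀ z ∈ D, DifferentiableOn ℂ (fun ζ => g (z, ζ)) Ω)
    (hg_decay : ∀ α β, ExpDecayOn (fun x => eucNorm x.2) (D ×ˢ Ω) (mixedDeriv α β g))
    (ψ : ℂ → ℂ) (hψ_smooth : ContDiff ℝ ∞ ψ) (hψ_cpt : HasCompactSupport ψ)
    (hDψ : ∀ z ∈ D, ∀ τ ∈ tsupport ψ, Function.update z k τ ∈ D)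
    (G : Pt n → ℂ)
    (hG : ∀ x : Pt n, G x = (-(1 : ℂ) / (Real.pi : ℂ)) *
      ∫ τ : ℂ, ψ τ * g (Function.update x.1 k τ, x.2) / (τ - x.1 k)) :
    (ContDiffOn ℝ ∞ G (D ×ˢ Ω) ∧ ∀ z ∈ D, DifferentiableOn ℂ (fun ζ => G (z, ζ)) Ω) ∧
    (∀ x ∈ D ×ˢ Ω, dzbar k G x = ψ (x.1 k) * g x) ∧
    (∀ α β, ExpDecayOn (fun x => eucNorm x.2) (D ×ˢ Ω) (mixedDeriv α β G)) ∧
    (∀ j : Fin n, j ≠ k → (∀ x ∈ D ×ˢ Ω, dzbar j g x = 0) →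
      ∀ x ∈ D ×ˢ Ω, dzbar j G x = 0) := by
  have hVopen : IsOpen (D ×ˢ Ω) := hDopen.prod hΩopen
  have hcut := isFiberCutoff_zDirection hDopen hΩopen hψ_smooth hψ_cpt hDψ
  obtain rfl : G = cutoffCauchyTransform (zDirection k) (zCoord k) ψ g := funext fun x =>
    (hG x).trans (cutoffCauchyTransform_zDirection k ψ g x).symm
  have hG_smooth := hcut.contDiffOn_cutoffCauchyTransform hg_smooth
  simp only [mixedDeriv_eq_iterWirtinger, dzbar_eq_wirtinger] at hg_decay ⊢
  refine ⟨⟨hG_smooth, fun z hz ζ hζ => ?_⟩, hcut.wirtinger_cutoffCauchyTransform hg_smooth,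
    fun α β => ?_, fun j hj hgj => ?_⟩
  · have hg_dbar (w : Cn n) (x : Pt n) (hx : x ∈ D ×ˢ Ω) : wirtinger I (0, w) g x = 0 :=
      (differentiableAt_complex_prodMk_iff_wirtinger_eq_zero
        (differentiableAt_of_contDiffOn_infty hVopen hg_smooth hx)).mp
        ((hg_hol x.1 hx.1).differentiableAt (hΩopen.mem_nhds hx.2)) w
    refine DifferentiableAt.differentiableWithinAt ?_
    rw [differentiableAt_complex_prodMk_iff_wirtinger_eq_zero
      (differentiableAt_of_contDiffOn_infty hVopen hG_smooth ⟨hz, hζ⟩)]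
    exact fun w => hcut.wirtinger_cutoffCauchyTransform_eq_zero hg_smooth (by simp [zCoord])
      (hg_dbar w) (z, ζ) ⟨hz, hζ⟩
  · refine hcut.expDecayOn_iterWirtinger_cutoffCauchyTransform hg_smooth
      (fun x => eucNorm_nonneg x.2) (fun x t => by simp [zDirection]) _ fun l hl => ?_
    obtain ⟨α', β', rfl⟩ := exists_eq_mixedWord_of_sublist hl
    exact hg_decay α' β'
  · exact hcut.wirtinger_cutoffCauchyTransform_eq_zero hg_smooth
      (by simp [zCoord_zDirection, hj.symm]) hgj

theorem polydisc_eq_pi_ball {n : ℕ} (c : Fin n → ℂ) (r : Fin n → ℝ) :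
    {z : Cn n | ∀ i, ‖z i - c i‖ < r i} = Set.univ.pi fun i => Metric.ball (c i) (r i) := by
  ext z
  simp [dist_eq_norm]

/-- (Cut-off Cauchy–Pompeiu transform.) Let `D = D₁ × ⋯ × D_n` be an
open polydisc, `Ω` open, `g` `C^∞` on `D × Ω`, holomorphic in `ζ`, with exponential
decay of all `(z, z̄)`-derivatives.  Let `ψ` be a cut-off on `D_k`, `≡ 1` on a
neighborhood `N` of the closure of a disc `D'_k ⋐ D_k`, and let
`G(z, ζ) = (1/2πi) ∬ ψ(τ) g(…, τ, …, ζ)(τ − z_k)⁻¹ dτ ∧ dτ̄`.  Then `G` is `C^∞` on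
`D × Ω` and holomorphic in `ζ`, `∂G/∂z̄_k = g` where `z_k ∈ N`, `G` satisfies the same
exponential decay estimates on `D₁ × ⋯ × D'_k × ⋯ × D_n × Ω`, and `G` is holomorphic in
any variable `z_j`, `j ≠ k`, in which `g` is holomorphic. -/
theorem cutoff_cauchy_transform {n : ℕ} (c : Fin n → ℂ) (r : Fin n → ℝ)
    (hr : ∀ i, 0 < r i) (k : Fin n)
    (Ω : Set (Cn n)) (hΩopen : IsOpen Ω) (hΩ0 : (0 : Cn n) ∉ Ω)
    (D : Set (Cn n)) (hD : D = {z : Cn n | ∀ i, ‖z i - c i‖ < r i})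
    (g : Pt n → ℂ)
    (hg_smooth : ContDiffOn ℝ (⊤ : ℕ∞) g (D ×ˢ Ω))
    (hg_hol : ∀ z ∈ D, DifferentiableOn ℂ (fun ζ => g (z, ζ)) Ω)
    (hg_decay : ∀ α β : Fin n → ℕ, ∃ h C : ℝ, 0 < h ∧ 0 < C ∧
      ∀ x ∈ D ×ˢ Ω, ‖mixedDeriv α β g x‖ ≤ C * Real.exp (-h * eucNorm x.2))
    (c' : ℂ) (ρ : ℝ) (hρ : 0 < ρ)
    (hsub : Metric.closedBall c' ρ ⊆ Metric.ball (c k) (r k))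
    (ψ : ℂ → ℝ) (hψ_smooth : ContDiff ℝ (⊤ : ℕ∞) ψ) (hψ_cpt : HasCompactSupport ψ)
    (hψ_supp : tsupport ψ ⊆ Metric.ball (c k) (r k))
    (N : Set ℂ) (hNopen : IsOpen N) (hNsub : Metric.closedBall c' ρ ⊆ N)
    (hψ_one : ∀ τ ∈ N, ψ τ = 1)
    (G : Pt n → ℂ)
    (hG : ∀ x : Pt n, G x = (-(1 : ℂ) / (Real.pi : ℂ)) *
      ∫ τ : ℂ, (ψ τ : ℂ) * g (Function.update x.1 k τ, x.2) / (τ - x.1 k)) :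
    (ContDiffOn ℝ (⊤ : ℕ∞) G (D ×ˢ Ω) ∧
      ∀ z ∈ D, DifferentiableOn ℂ (fun ζ => G (z, ζ)) Ω) ∧
    (∀ x : Pt n, x.1 ∈ D → x.2 ∈ Ω → x.1 k ∈ N → dzbar k G x = g x) ∧
    (∀ α β : Fin n → ℕ, ∃ h' C' : ℝ, 0 < h' ∧ 0 < C' ∧
      ∀ x : Pt n, (∀ i, i ≠ k → ‖x.1 i - c i‖ < r i) → ‖x.1 k - c'‖ < ρ → x.2 ∈ Ω →
        ‖mixedDeriv α β G x‖ ≤ C' * Real.exp (-h' * eucNorm x.2)) ∧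
    (∀ j : Fin n, j ≠ k → (∀ x ∈ D ×ˢ Ω, dzbar j g x = 0) →
      ∀ x ∈ D ×ˢ Ω, dzbar j G x = 0) := by
  rw [polydisc_eq_pi_ball] at hD
  subst hD
  have hupdate : ∀ z ∈ Set.univ.pi fun i => Metric.ball (c i) (r i),
      ∀ τ ∈ Metric.ball (c k) (r k),
        Function.update z k τ ∈ Set.univ.pi fun i => Metric.ball (c i) (r i) :=
    fun z hz τ hτ => Set.update_mem_pi_iff_of_mem hz |>.mpr fun _ => hτ
  obtain ⟨hsmooth, hdbar, hdecay, hhol⟩ := cutoff_cauchy_transform_general k Ω hΩopen _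
    (isOpen_set_pi Set.finite_univ fun i _ => Metric.isOpen_ball) g hg_smooth hg_hol hg_decay
    (fun τ => (ψ τ : ℂ)) (ofRealCLM.contDiff.comp hψ_smooth) (hψ_cpt.comp_left ofReal_zero)
    (fun z hz τ hτ => hupdate z hz τ (hψ_supp (tsupport_comp_subset ofReal_zero ψ hτ))) G hG
  refine ⟨hsmooth, fun x hxD hxΩ hxN => ?_, fun α β => ?_, hhol⟩
  · rw [hdbar x ⟨hxD, hxΩ⟩, hψ_one _ hxN, ofReal_one, one_mul]
  · obtain ⟨h, C, hh, hC, hbound⟩ := hdecay α β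
    refine ⟨h, C, hh, hC, fun x hx hxk hxΩ => hbound x ⟨fun i _ => ?_, hxΩ⟩⟩
    rcases eq_or_ne i k with rfl | hik
    · exact hsub (mem_closedBall_iff_norm.mpr hxk.le)
    · exact mem_ball_iff_norm.mpr (hx i hik)
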